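/- Let A be a finite alphabet, Q a pmf on A with Q(a) > 0 for all a, and P = [p₁,…,p_{|A|}] a pmf with n·p_i a positive integer for every i. Let S ⊆ Aⁿ be the set of all strings with empirical pmf P, so K := |S| = n!/Π_i (n·p_i)!, and let c = (Π_{i=1}^{|A|} p_i)^{1/(|A|−1)}. Then the constant-composition distribution matcher satisfies ((|A|−1)/2)·log₂(2πn·c) + n·D(P‖Q) ≤ D(U_K ‖ Qⁿ) ≤ ((|A|−1)/2)·log₂(8n·c) + n·D(P‖Q), where D(U_K ‖ Qⁿ) = Σ_{aⁿ∈S}(1/K)·log₂((1/K)/Qⁿ(aⁿ)). -/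

import Mathlib

/-- Informational divergence (base 2) of two pmfs on a finite set. -/
noncomputable def kl {Ω : Type*} [Fintype Ω] (P Q : Ω → ℝ) : ℝ :=
  ∑ a, P a * Real.logb 2 (P a / Q a)

/-- The n-fold product pmf on strings of length `n`. -/
noncomputable def prodPmf {A : Type*} [Fintype A] (Q : A → ℝ) (n : ℕ) :
    (Fin n → A) → ℝ :=
  fun x => ∏ i, Q (x i)

/-!
Every string of type `P = c / n` has the same probability under `Qⁿ`, so `D(U_K‖Qⁿ)` exceeds
`n D(P‖Q)` by exactly the rate loss `n H(P) - log K`, which does not depend on `Q`. Write each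
factorial in the multinomial coefficient `K` as `k! = s_k √(2k) (k/e)ᵏ` with `s_k` Mathlib's
`stirlingSeq`. The powers `(k/e)ᵏ` cancel against `n H(P)`, the square roots give the term
`(|A| - 1)/2 * log (2 n c₀)`, and what remains is to estimate `∏ s_{cᵢ} / s_n`.
Since `s` decreases to `√π`, we have `√π s_{a+b} ≤ s_a s_b`. Since `log s` is convex, the ratio
`s_a s_b / s_{a+b}` is largest at `a = b = 1`, where it equals `2`. Iterating over the letters
yields `√π ^ (|A| - 1) ≤ ∏ s_{cᵢ} / s_n ≤ 2 ^ (|A| - 1)`, hence the constants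
`2π = 2 (√π)²` and `8 = 2 · 2²`.
-/

namespace CCDM

open Finset Stirling
open Real (log logb pi)
open scoped Nat

section Stirling

theorem add_le_add_zero_of_antitone_sub {G : Type*} [AddCommGroup G] [PartialOrder G]
    [IsOrderedAddMonoid G] {f : ℕ → G} (hf : Antitone fun k ↦ f k - f (k + 1)) (a b : ℕ) :
    f a + f b ≤ f (a + b) + f 0 := by
  induction a with
  | zero => rw [zero_add, add_comm]
  | succ a ih =>
    calc f (a + 1) + f b = f a + f b - (f a - f (a + 1)) := by abel
      _ ≤ f (a + b) + f 0 - (f (a + b) - f (a + b + 1)) :=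
        sub_le_sub ih (hf (Nat.le_add_right a b))
      _ = f (a + 1 + b) + f 0 := by rw [Nat.add_right_comm]; abel

theorem antitone_log_stirlingSeq_sub :
    Antitone fun k : ℕ ↦ log (stirlingSeq (k + 1)) - log (stirlingSeq (k + 2)) := by
  intro m k hmk
  refine hasSum_le (fun j ↦ ?_) (log_stirlingSeq_sdiff_hasSum k) (log_stirlingSeq_sdiff_hasSum m)
  gcongr

theorem log_factorial_eq_log_stirlingSeq {k : ℕ} (hk : k ≠ 0) :
    log k ! = log (stirlingSeq k) + log 2 / 2 + log k / 2 + k * log k - k := by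
  have hk' : (k : ℝ) ≠ 0 := Nat.cast_ne_zero.mpr hk
  rw [log_stirlingSeq_formula, Real.log_mul two_ne_zero hk',
    Real.log_div hk' (Real.exp_ne_zero 1), Real.log_exp]
  ring

theorem two_mul_log_stirlingSeq_one_sub :
    2 * log (stirlingSeq 1) - log (stirlingSeq 2) = log 2 := by
  have h₁ := log_factorial_eq_log_stirlingSeq one_ne_zero
  have h₂ := log_factorial_eq_log_stirlingSeq two_ne_zero
  norm_num [-stirlingSeq_one] at h₁ h₂
  linarith

theorem log_stirlingSeq_add_log_stirlingSeq_le {a b : ℕ} (ha : 0 < a) (hb : 0 < b) :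
    log (stirlingSeq a) + log (stirlingSeq b) ≤ log (stirlingSeq (a + b)) + log 2 := by
  obtain ⟨a, rfl⟩ := Nat.exists_eq_add_of_lt ha
  obtain ⟨b, rfl⟩ := Nat.exists_eq_add_of_lt hb
  simp only [zero_add]
  have h_convex := add_le_add_zero_of_antitone_sub
    (f := fun k ↦ log (stirlingSeq (k + 1))) antitone_log_stirlingSeq_sub a b
  have h_step := antitone_log_stirlingSeq_sub (Nat.zero_le (a + b))
  have h_base := two_mul_log_stirlingSeq_one_sub
  rw [show a + 1 + (b + 1) = a + b + 2 by ring]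
  simp only [zero_add] at h_convex h_step
  linarith

theorem log_stirlingSeq_add_le {a b : ℕ} (ha : 0 < a) (hb : 0 < b) :
    log (stirlingSeq (a + b)) ≤ log (stirlingSeq a) + log (stirlingSeq b) - log pi / 2 := by
  have h_pi : log pi / 2 ≤ log (stirlingSeq b) := by
    rw [← Real.log_sqrt Real.pi_pos.le]
    exact Real.log_le_log (by positivity) (sqrt_pi_le_stirlingSeq hb.ne')
  have h_anti : log (stirlingSeq (a + b)) ≤ log (stirlingSeq a) := by
    obtain ⟨a, rfl⟩ := Nat.exists_eq_add_of_lt ha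
    rw [zero_add, Nat.add_right_comm]
    exact log_stirlingSeq'_antitone (Nat.le_add_right a b)
  linarith

end Stirling

section Multinomial

variable {A : Type*} {s : Finset A} {c : A → ℕ}

theorem sum_log_stirlingSeq_le (hs : s.Nonempty) (hc : ∀ i ∈ s, 0 < c i) :
    ∑ i ∈ s, log (stirlingSeq (c i)) ≤ log (stirlingSeq (∑ i ∈ s, c i)) + (#s - 1) * log 2 := by
  have h := le_sum_nonempty_of_subadditive_on_pred
    (fun k ↦ log 2 - log (stirlingSeq k)) (0 < ·)
    (fun a b ha hb ↦ by linarith [log_stirlingSeq_add_log_stirlingSeq_le ha hb])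
    (fun _ _ ↦ add_pos) c s hs hc
  rw [sum_sub_distrib, sum_const, nsmul_eq_mul] at h
  linarith

theorem le_sum_log_stirlingSeq (hs : s.Nonempty) (hc : ∀ i ∈ s, 0 < c i) :
    log (stirlingSeq (∑ i ∈ s, c i)) + (#s - 1) * (log pi / 2)
      ≤ ∑ i ∈ s, log (stirlingSeq (c i)) := by
  have h := le_sum_nonempty_of_subadditive_on_pred
    (fun k ↦ log (stirlingSeq k) - log pi / 2) (0 < ·)
    (fun a b ha hb ↦ by linarith [log_stirlingSeq_add_le ha hb])
    (fun _ _ ↦ add_pos) c s hs hc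
  rw [sum_sub_distrib, sum_const, nsmul_eq_mul] at h
  linarith

variable (s c) in
theorem log_multinomial :
    log (Nat.multinomial s c) = log (∑ i ∈ s, c i)! - ∑ i ∈ s, log (c i)! := by
  have h_spec : (∏ i ∈ s, ((c i)! : ℝ)) * Nat.multinomial s c = (∑ i ∈ s, c i)! := by
    exact_mod_cast Nat.multinomial_spec s c
  have h_fact : ∀ i ∈ s, ((c i)! : ℝ) ≠ 0 := fun i _ ↦ Nat.cast_ne_zero.mpr (c i).factorial_ne_zero
  rw [← h_spec, Real.log_mul (prod_ne_zero_iff.mpr h_fact)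
    (Nat.cast_ne_zero.mpr (Nat.multinomial_pos s c).ne'), Real.log_prod h_fact]
  ring

/-- The rate loss `n H(P) - log K`, in nats, of the constant-composition code with letter counts
`c`, where `n = ∑ i ∈ s, c i`, `P = c / n` and `K` is the multinomial coefficient. The entropy is
written as `n H(P) = n log n - ∑ i ∈ s, c i log (c i)` to avoid division. -/
noncomputable def rateLoss (s : Finset A) (c : A → ℕ) : ℝ :=
  (∑ i ∈ s, c i : ℕ) * log (∑ i ∈ s, c i : ℕ) - ∑ i ∈ s, c i * log (c i)
    - log (Nat.multinomial s c)

theorem rateLoss_eq_log_stirlingSeq (hs : s.Nonempty) (hc : ∀ i ∈ s, 0 < c i) :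
    rateLoss s c = ∑ i ∈ s, log (stirlingSeq (c i)) - log (stirlingSeq (∑ i ∈ s, c i))
      + (#s - 1) * (log 2 / 2) + (∑ i ∈ s, log (c i) - log (∑ i ∈ s, c i : ℕ)) / 2 := by
  have h_sum : ∑ i ∈ s, log (c i)! = ∑ i ∈ s, log (stirlingSeq (c i))
      + #s * (log 2 / 2) + (∑ i ∈ s, log (c i)) / 2
      + ∑ i ∈ s, c i * log (c i) - (∑ i ∈ s, c i : ℕ) := by
    rw [sum_congr rfl fun i hi ↦ log_factorial_eq_log_stirlingSeq (hc i hi).ne']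
    simp only [sum_add_distrib, sum_sub_distrib, sum_const, nsmul_eq_mul, sum_div, Nat.cast_sum]
  rw [rateLoss, log_multinomial, h_sum, log_factorial_eq_log_stirlingSeq (sum_pos hc hs).ne']
  ring

theorem le_rateLoss (hs : s.Nonempty) (hc : ∀ i ∈ s, 0 < c i) :
    (#s - 1) / 2 * log (2 * pi)
      + (∑ i ∈ s, log (c i) - log (∑ i ∈ s, c i : ℕ)) / 2 ≤ rateLoss s c := by
  rw [rateLoss_eq_log_stirlingSeq hs hc, Real.log_mul two_ne_zero Real.pi_ne_zero]
  linarith [le_sum_log_stirlingSeq hs hc]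

theorem rateLoss_le (hs : s.Nonempty) (hc : ∀ i ∈ s, 0 < c i) :
    rateLoss s c ≤ (#s - 1) / 2 * log 8
      + (∑ i ∈ s, log (c i) - log (∑ i ∈ s, c i : ℕ)) / 2 := by
  have h_log_eight : log 8 = 3 * log 2 := by
    rw [show (8 : ℝ) = 2 ^ 3 by norm_num, Real.log_pow, Nat.cast_ofNat]
  rw [rateLoss_eq_log_stirlingSeq hs hc, h_log_eight]
  linarith [sum_log_stirlingSeq_le hs hc]

end Multinomial

section TypeClass

variable {ι A : Type*} [Fintype ι] [DecidableEq A]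

theorem mem_orbit_domMulAct_iff {x y : ι → A} :
    y ∈ MulAction.orbit (Equiv.Perm ι)ᵈᵐᵃ x ↔ ∀ i, #{j | y j = i} = #{j | x j = i} := by
  simp only [← Fintype.card_subtype, Fintype.card_eq]
  constructor
  · rintro ⟨σ, rfl⟩ i
    exact ⟨(DomMulAct.mk.symm σ).subtypeEquiv fun _ ↦ Iff.rfl⟩
  · intro h
    let σ : Equiv.Perm ι := Equiv.ofFiberEquiv fun i ↦ (h i).some
    exact ⟨DomMulAct.mk σ, funext (Equiv.ofFiberEquiv_map fun i ↦ (h i).some)⟩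

variable [DecidableEq ι] [Fintype A] {c : A → ℕ}

variable (ι c) in
/-- The type class of `c`: the strings, indexed by `ι`, in which each letter `i` occurs exactly
`c i` times. -/
def typeClass : Finset (ι → A) :=
  {x | ∀ i, #{j | x j = i} = c i}

theorem mem_typeClass {x : ι → A} : x ∈ typeClass ι c ↔ ∀ i, #{j | x j = i} = c i := by
  simp [typeClass]

theorem typeClass_nonempty (hc : ∑ i, c i = Fintype.card ι) : (typeClass ι c).Nonempty := by
  obtain ⟨e⟩ : Nonempty (ι ≃ Σ i, Fin (c i)) := by
    rw [← Fintype.card_eq, Fintype.card_sigma]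
    simp only [Fintype.card_fin, hc]
  refine ⟨fun j ↦ (e j).1, mem_typeClass.mpr fun i ↦ ?_⟩
  rw [← Fintype.card_subtype, ← Fintype.card_fin (c i)]
  exact Fintype.card_congr
    ((e.subtypeEquiv (q := fun p ↦ p.1 = i) fun _ ↦ Iff.rfl).trans (Equiv.sigmaSubtype i))

theorem card_typeClass_mul_prod_factorial (hc : ∑ i, c i = Fintype.card ι) :
    #(typeClass ι c) * ∏ i, (c i)! = (Fintype.card ι)! := by
  obtain ⟨x, hx⟩ := typeClass_nonempty hc
  rw [mem_typeClass] at hx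
  have h_orbit : #(typeClass ι c) = Nat.card (MulAction.orbit (Equiv.Perm ι)ᵈᵐᵃ x) := by
    rw [← Fintype.card_coe, ← Nat.card_eq_fintype_card]
    exact Nat.card_congr (Equiv.subtypeEquivRight fun y ↦ by
      simp only [mem_typeClass, mem_orbit_domMulAct_iff, hx])
  have h_stabilizer : Nat.card (MulAction.stabilizer (Equiv.Perm ι)ᵈᵐᵃ x) = ∏ i, (c i)! := by
    have h := DomMulAct.stabilizer_card x
    simp only [Fintype.card_subtype, hx] at h
    rw [← h, ← Fintype.card_subtype, ← Nat.card_eq_fintype_card]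
    exact Nat.card_congr (DomMulAct.mk.symm.subtypeEquiv fun _ ↦ DomMulAct.mem_stabilizer_iff)
  rw [h_orbit, ← h_stabilizer, ← Nat.card_prod,
    Nat.card_congr (MulAction.orbitProdStabilizerEquivGroup (Equiv.Perm ι)ᵈᵐᵃ x),
    Nat.card_congr DomMulAct.mk.symm, Nat.card_eq_fintype_card, Fintype.card_perm]

theorem card_typeClass (hc : ∑ i, c i = Fintype.card ι) :
    #(typeClass ι c) = Nat.multinomial univ c := by
  rw [Nat.multinomial, hc, ← card_typeClass_mul_prod_factorial hc,
    Nat.mul_div_cancel _ (Nat.prod_factorial_pos univ c)]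

theorem prod_comp_eq_prod_pow_of_mem_typeClass {M : Type*} [CommMonoid M] (Q : A → M) {x : ι → A}
    (hx : x ∈ typeClass ι c) : ∏ j, Q (x j) = ∏ i, Q i ^ c i := by
  rw [← prod_fiberwise' univ x Q]
  simp only [prod_const, mem_typeClass.mp hx]

end TypeClass

section Divergence

variable {A : Type*} [Fintype A] {n : ℕ} {c : A → ℕ} {Q : A → ℝ}

theorem natCast_mul_kl_eq (hcn : ∑ i, c i = n) (hQ : ∀ i, 0 < Q i) :
    n * kl (fun i ↦ (c i : ℝ) / n) Q
      = (∑ i, c i * log (c i) - n * log n - ∑ i, c i * log (Q i)) / log 2 := by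
  have h_log_n : n * log n = ∑ i, c i * log n := by
    rw [← sum_mul, ← hcn, Nat.cast_sum]
  rw [kl, h_log_n, ← sum_sub_distrib, ← sum_sub_distrib, mul_sum, sum_div]
  refine sum_congr rfl fun i _ ↦ ?_
  rcases (c i).eq_zero_or_pos with hci_zero | hci_pos
  · simp [hci_zero]
  have hci : (0 : ℝ) < c i := Nat.cast_pos.mpr hci_pos
  have hn : (0 : ℝ) < n :=
    hci.trans_le (Nat.cast_le.mpr (hcn ▸ single_le_sum (fun _ _ ↦ Nat.zero_le _) (mem_univ i)))
  rw [logb, Real.log_div (by positivity) (hQ i).ne', Real.log_div hci.ne' hn.ne']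
  field_simp

theorem log_prodPmf_of_mem_typeClass [DecidableEq A] (hQ : ∀ i, 0 < Q i) {x : Fin n → A}
    (hx : x ∈ typeClass (Fin n) c) :
    log (prodPmf Q n x) = ∑ i, c i * log (Q i) := by
  rw [prodPmf, prod_comp_eq_prod_pow_of_mem_typeClass Q hx,
    Real.log_prod fun i _ ↦ (pow_pos (hQ i) _).ne']
  simp only [Real.log_pow]

theorem sum_typeClass_mul_logb_eq_rateLoss_add_kl [DecidableEq A] (hcn : ∑ i, c i = n)
    (hQ : ∀ i, 0 < Q i) :
    ∑ x ∈ typeClass (Fin n) c, 1 / (#(typeClass (Fin n) c) : ℝ)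
        * logb 2 (1 / (#(typeClass (Fin n) c) : ℝ) / prodPmf Q n x)
      = rateLoss univ c / log 2 + n * kl (fun i ↦ (c i : ℝ) / n) Q := by
  have h_card : #(typeClass (Fin n) c) = Nat.multinomial univ c :=
    card_typeClass (hcn.trans (Fintype.card_fin n).symm)
  set K : ℕ := #(typeClass (Fin n) c) with hK_def
  have hK : (0 : ℝ) < K := Nat.cast_pos.mpr (h_card ▸ Nat.multinomial_pos univ c)
  have h_term : ∀ x ∈ typeClass (Fin n) c,
      1 / (K : ℝ) * logb 2 (1 / (K : ℝ) / prodPmf Q n x)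
        = 1 / (K : ℝ) * ((-log K - ∑ i, c i * log (Q i)) / log 2) := by
    intro x hx
    have h_pos : 0 < prodPmf Q n x := prod_pos fun j _ ↦ hQ (x j)
    rw [logb, Real.log_div (by positivity) h_pos.ne', log_prodPmf_of_mem_typeClass hQ hx,
      one_div, Real.log_inv]
  rw [sum_congr rfl h_term, sum_const, ← hK_def, nsmul_eq_mul, natCast_mul_kl_eq hcn hQ,
    rateLoss, hcn, ← h_card]
  field_simp
  ring

theorem card_sub_one_mul_log_prod_rpow {P : A → ℝ} (hP : ∀ i, 0 < P i) (hP_sum : ∑ i, P i = 1) :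
    ((Fintype.card A : ℝ) - 1) * log ((∏ i, P i) ^ (1 / ((Fintype.card A : ℝ) - 1)))
      = ∑ i, log (P i) := by
  rw [Real.log_rpow (prod_pos fun i _ ↦ hP i), Real.log_prod fun i _ ↦ (hP i).ne']
  by_cases h_card : Fintype.card A = 1
  -- Here the exponent is `1 / 0 = 0`; the right-hand side vanishes as well, since `P = 1`.
  · obtain ⟨a, ha⟩ := Fintype.card_eq_one_iff.mp h_card
    have h_univ : (univ : Finset A) = {a} := eq_singleton_iff_unique_mem.mpr ⟨mem_univ a, by simpa⟩
    rw [h_univ, sum_singleton] at hP_sum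
    simp [h_univ, hP_sum]
  · have : (Fintype.card A : ℝ) - 1 ≠ 0 := sub_ne_zero.mpr (mod_cast h_card)
    field_simp

theorem card_sub_one_div_two_mul_log_mul_prod_rpow (hn : 0 < n) (hc : ∀ i, 0 < c i)
    (hcn : ∑ i, c i = n) {t : ℝ} (ht : 0 < t) :
    ((Fintype.card A : ℝ) - 1) / 2
        * log (t * n * (∏ i, (c i : ℝ) / n) ^ (1 / ((Fintype.card A : ℝ) - 1)))
      = ((Fintype.card A : ℝ) - 1) / 2 * log t + (∑ i, log (c i) - log n) / 2 := by
  have hci (i) : (0 : ℝ) < c i := Nat.cast_pos.mpr (hc i)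
  have hn' : (0 : ℝ) < n := Nat.cast_pos.mpr hn
  have hP (i) : 0 < (c i : ℝ) / n := div_pos (hci i) hn'
  have hP_sum : ∑ i, (c i : ℝ) / n = 1 := by
    rw [← sum_div, ← Nat.cast_sum, hcn, div_self hn'.ne']
  have h_log_prod := card_sub_one_mul_log_prod_rpow hP hP_sum
  have h_sum_log : ∑ i, log ((c i : ℝ) / n) = ∑ i, log (c i) - Fintype.card A * log n := by
    simp only [fun i ↦ Real.log_div (hci i).ne' hn'.ne', sum_sub_distrib, sum_const, card_univ,
      nsmul_eq_mul]
  rw [Real.log_mul (by positivity) (Real.rpow_pos_of_pos (prod_pos fun i _ ↦ hP i) _).ne',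
    Real.log_mul ht.ne' hn'.ne']
  linear_combination (h_log_prod + h_sum_log) / 2

end Divergence

end CCDM

/-- Let `Q` be a full-support pmf on `A`, `P` a pmf with
`n·P i = c i` a positive integer for every `i`, `S` the set of strings of
empirical pmf `P`, `K = |S| = n!/∏ i (c i)!`, and `c₀ = (∏ i P i)^{1/(|A|−1)}`.
The constant-composition distribution matcher satisfies
`((|A|−1)/2)·log₂(2πn·c₀) + n·D(P‖Q) ≤ D(U_K‖Qⁿ) ≤ ((|A|−1)/2)·log₂(8n·c₀) + n·D(P‖Q)`,
where `D(U_K‖Qⁿ) = ∑_{aⁿ∈S} (1/K)·log₂((1/K)/Qⁿ(aⁿ))`. -/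
theorem ccdm_divergence_bounds {A : Type*} [Fintype A] [DecidableEq A]
    (n : ℕ) (hn : 0 < n)
    (Q : A → ℝ) (hQpos : ∀ a, 0 < Q a) (hQ1 : ∑ a, Q a = 1)
    (P : A → ℝ) (c : A → ℕ) (hc : ∀ i, 0 < c i) (hcsum : ∑ i, c i = n)
    (hP : ∀ i, P i = (c i : ℝ) / n)
    (S : Finset (Fin n → A))
    (hS : ∀ x : Fin n → A,
      x ∈ S ↔ ∀ i, (Finset.univ.filter (fun j => x j = i)).card = c i)
    (c₀ : ℝ) (hc₀ : c₀ = (∏ i, P i) ^ ((1 : ℝ) / ((Fintype.card A : ℝ) - 1))) :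
    (S.card : ℝ) = (n.factorial : ℝ) / ∏ i, ((c i).factorial : ℝ)
    ∧ ((Fintype.card A : ℝ) - 1) / 2 * Real.logb 2 (2 * Real.pi * n * c₀)
          + (n : ℝ) * kl P Q
        ≤ ∑ x ∈ S, (1 / (S.card : ℝ)) * Real.logb 2 ((1 / (S.card : ℝ)) / prodPmf Q n x)
    ∧ ∑ x ∈ S, (1 / (S.card : ℝ)) * Real.logb 2 ((1 / (S.card : ℝ)) / prodPmf Q n x)
        ≤ ((Fintype.card A : ℝ) - 1) / 2 * Real.logb 2 (8 * n * c₀)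
          + (n : ℝ) * kl P Q := by
  subst hcsum hc₀
  obtain rfl : P = fun i ↦ (c i : ℝ) / (∑ i, c i : ℕ) := funext hP
  obtain rfl : S = CCDM.typeClass _ c := Finset.ext fun x ↦ by rw [hS, CCDM.mem_typeClass]
  have hA : (Finset.univ : Finset A).Nonempty := Finset.nonempty_of_sum_ne_zero hn.ne'
  have h_card := CCDM.card_typeClass_mul_prod_factorial (Fintype.card_fin (∑ i, c i)).symm
  rw [Fintype.card_fin] at h_card
  rw [CCDM.sum_typeClass_mul_logb_eq_rateLoss_add_kl rfl hQpos]
  refine ⟨?_, ?_, ?_⟩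
  · rw [eq_div_iff (by positivity)]
    exact_mod_cast h_card
  · gcongr
    rw [Real.logb, ← mul_div_assoc,
      CCDM.card_sub_one_div_two_mul_log_mul_prod_rpow hn hc rfl (by positivity)]
    gcongr
    exact CCDM.le_rateLoss hA fun i _ ↦ hc i
  · gcongr
    rw [Real.logb, ← mul_div_assoc,
      CCDM.card_sub_one_div_two_mul_log_mul_prod_rpow hn hc rfl (by positivity)]
    gcongr
    exact CCDM.rateLoss_le hA fun i _ ↦ hc i
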